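/- Let κ ∈ ℕ* with κ ≥ 2, and let x, y ∈ [−1, 1]. Then U_{ακ−1}(x)·U_{βκ−1}(y) − U_{ακ−1}(y)·U_{βκ−1}(x) = 0 for all α, β ∈ ℕ* if and only if U_{κ−1}(x) = 0, or U_{κ−1}(y) = 0, or T_κ(x) = T_κ(y). -/

import Mathlib

open Real

/-- Chebyshev polynomial of the first kind, as a real function. -/
noncomputable def chebT (n : ℕ) (x : ℝ) : ℝ := (Polynomial.Chebyshev.T ℝ n).eval x

/-- Chebyshev polynomial of the second kind, as a real function. -/
noncomputable def chebU (n : ℕ) (x : ℝ) : ℝ := (Polynomial.Chebyshev.U ℝ n).eval x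

/-!
Composition with `T_κ` gives `U_{ακ-1} = (U_{α-1} ∘ T_κ) · U_{κ-1}`, so the commutator
`[U_{ακ-1}(x), U_{βκ-1}(y)]` is `U_{κ-1}(x) · U_{κ-1}(y)` times the commutator of `U_{α-1}` and
`U_{β-1}` at the points `T_κ(x)` and `T_κ(y)`. The latter always vanishes when these points agree,
and for `α = 1`, `β = 2` it is twice their difference.
-/

section Chebyshev

open Polynomial Polynomial.Chebyshev

variable (R : Type*) [CommRing R]

theorem chebyshev_T_mul_U (m k : ℤ) : 2 * T R m * U R k = U R (k + m) + U R (k - m) := by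
  induction m using Polynomial.Chebyshev.induct with
  | zero => simp [two_mul]
  | one => rw [U_add_one, T_one]; ring
  | add_two m ih ih_prev =>
    have hT := T_add_two R m
    have hadd := U_add_two R (k + m)
    have hsub := U_sub_two R (k - m)
    linear_combination (norm := ring_nf) 2 * U R k * hT - hadd - hsub + 2 * X * ih - ih_prev
  | neg_add_one m ih ih_prev =>
    have hT := T_sub_one R (-m)
    have hadd := U_add_one R (k + m)
    have hsub := U_sub_one R (k - m)
    linear_combination (norm := ring_nf) 2 * U R k * hT - hadd - hsub + 2 * X * ih - ih_prev

theorem chebyshev_U_mul_sub_one (m n : ℤ) :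
    U R (m * n - 1) = (U R (m - 1)).comp (T R n) * U R (n - 1) := by
  have recurrence (m : ℤ) :
      U R ((m + 1) * n - 1) = 2 * T R n * U R (m * n - 1) - U R ((m - 1) * n - 1) := by
    linear_combination (norm := ring_nf) -chebyshev_T_mul_U R n (m * n - 1)
  induction m using Polynomial.Chebyshev.induct with
  | zero => simp
  | one => simp
  | add_two m ih ih_prev =>
    have hU := congr_arg (comp · (T R n)) (U_add_one R (m : ℤ))
    simp only [sub_comp, mul_comp, X_comp, ofNat_comp] at hU
    have hrec := recurrence (m + 1)
    linear_combination (norm := ring_nf) hrec - U R (n - 1) * hU + 2 * T R n * ih - ih_prev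
  | neg_add_one m ih ih_prev =>
    have hU := congr_arg (comp · (T R n)) (U_sub_one R (-m - 1 : ℤ))
    simp only [sub_comp, mul_comp, X_comp, ofNat_comp] at hU
    have hrec := recurrence (-m)
    linear_combination (norm := ring_nf) hrec - U R (n - 1) * hU + 2 * T R n * ih - ih_prev

variable {R}

/-- The commutator `[f(x), g(y)] = f(x) g(y) - f(y) g(x)` of two polynomials at two points. -/
def evalCommutator (f g : R[X]) (x y : R) : R :=
  f.eval x * g.eval y - f.eval y * g.eval x

theorem evalCommutator_same_point (f g : R[X]) (x : R) : evalCommutator f g x x = 0 :=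
  sub_self _

theorem evalCommutator_U_zero_U_one (x y : R) :
    evalCommutator (U R 0) (U R 1) x y = 2 * (y - x) := by
  simp [evalCommutator, mul_sub]

theorem evalCommutator_U_mul_sub_one (a b n : ℤ) (x y : R) :
    evalCommutator (U R (a * n - 1)) (U R (b * n - 1)) x y =
      (U R (n - 1)).eval x * (U R (n - 1)).eval y *
        evalCommutator (U R (a - 1)) (U R (b - 1)) ((T R n).eval x) ((T R n).eval y) := by
  simp only [evalCommutator, chebyshev_U_mul_sub_one, eval_mul, eval_comp]
  ring

theorem commutators_vanish_iff_general [NoZeroDivisors R] [NeZero (2 : R)] (κ : ℤ) (x y : R) :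
    (∀ α β : ℕ, 1 ≤ α → 1 ≤ β →
        evalCommutator (U R (α * κ - 1)) (U R (β * κ - 1)) x y = 0) ↔
      (U R (κ - 1)).eval x = 0 ∨ (U R (κ - 1)).eval y = 0 ∨
        (T R κ).eval x = (T R κ).eval y := by
  simp only [evalCommutator_U_mul_sub_one, mul_eq_zero, or_assoc]
  constructor
  · intro h
    refine (h 1 2 le_rfl one_le_two).imp_right (Or.imp_right fun h₁₂ => ?_)
    have two_mul_sub : 2 * ((T R κ).eval y - (T R κ).eval x) = 0 :=
      (evalCommutator_U_zero_U_one _ _).symm.trans h₁₂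
    exact (sub_eq_zero.mp ((mul_eq_zero_iff_left two_ne_zero).mp two_mul_sub)).symm
  · intro h α β _ _
    refine h.imp_right (Or.imp_right fun hT => ?_)
    rw [hT, evalCommutator_same_point]

end Chebyshev

theorem chebU_sub_one {n : ℕ} (hn : 1 ≤ n) (x : ℝ) :
    chebU (n - 1) x = (Polynomial.Chebyshev.U ℝ ((n : ℤ) - 1)).eval x := by
  rw [chebU, Nat.cast_pred hn]

/-- For `x, y ∈ [-1,1]`, all the commutators `[U_{ακ-1}(x), U_{βκ-1}(y)]` vanish
iff `U_{κ-1}(x) = 0`, or `U_{κ-1}(y) = 0`, or `T_κ(x) = T_κ(y)`. -/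
theorem commutators_vanish_iff (κ : ℕ) (hκ : 2 ≤ κ) (x y : ℝ)
    (hx : x ∈ Set.Icc (-1 : ℝ) 1) (hy : y ∈ Set.Icc (-1 : ℝ) 1) :
    (∀ α β : ℕ, 1 ≤ α → 1 ≤ β →
        chebU (α * κ - 1) x * chebU (β * κ - 1) y
          - chebU (α * κ - 1) y * chebU (β * κ - 1) x = 0) ↔
      chebU (κ - 1) x = 0 ∨ chebU (κ - 1) y = 0 ∨ chebT κ x = chebT κ y := by
  have hκ₀ : κ ≠ 0 := by lia
  simpa +contextual [evalCommutator, chebT, chebU_sub_one, Nat.one_le_iff_ne_zero, hκ₀] using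
    commutators_vanish_iff_general (κ : ℤ) x y
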